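/- arXiv:0811.1818 — 2 statements merged into one kernel-verified Lean document; each statement's English description precedes it below -/
import Mathlib

section
/- Let A be an invertible symmetric n×n complex matrix such that the Hermitian matrix B = A⁻¹ · conj(A⁻¹) has n pairwise distinct eigenvalues with corresponding eigenvectors w⁽¹⁾, …, w⁽ⁿ⁾. Then the variety of contacts Σ = { z ∈ ℂⁿ : ∃ μ ∈ ℂ, A z = μ · conj(z) } is the union of the n complex lines ℂ·w⁽¹⁾, …, ℂ·w⁽ⁿ⁾ together with 0. -/
lemma eig_aux {n : ℕ} (B : Matrix (Fin n) (Fin n) ℂ)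
    (ev : Fin n → ℂ) (hev : Function.Injective ev)
    (w : Fin n → Fin n → ℂ) (hw : ∀ i, w i ≠ 0)
    (heig : ∀ i, B.mulVec (w i) = ev i • w i)
    (v : Fin n → ℂ) (hv : v ≠ 0) (l : ℂ) (h : B.mulVec v = l • v) :
    ∃ i, ∃ t : ℂ, l = ev i ∧ v = t • w i := by
  have hli : LinearIndependent ℂ w := by
    refine Module.End.eigenvectors_linearIndependent' (Matrix.toLin' B) ev hev w ?_
    intro i
    refine ⟨?_, hw i⟩
    rw [Module.End.mem_eigenspace_iff, Matrix.toLin'_apply]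
    exact heig i
  have hspan : v ∈ Submodule.span ℂ (Set.range w) := by
    rw [hli.span_eq_top_of_card_eq_finrank' (by simp)]
    trivial
  obtain ⟨c, hc⟩ := (Submodule.mem_span_range_iff_exists_fun ℂ).1 hspan
  have hz : ∀ i, c i * (ev i - l) = 0 := by
    refine Fintype.linearIndependent_iff.1 hli _ ?_
    have h2 : B.mulVec v - l • v = 0 := by rw [h, sub_self]
    rw [← hc, Matrix.mulVec_sum, Finset.smul_sum, ← Finset.sum_sub_distrib] at h2
    rw [← h2]
    refine Finset.sum_congr rfl fun i _ => ?_
    rw [Matrix.mulVec_smul, heig i, smul_smul, smul_smul, ← sub_smul]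
    congr 1
    ring
  have hex : ∃ i, c i ≠ 0 := by
    by_contra! hcon
    apply hv
    rw [← hc]
    simp [hcon]
  obtain ⟨i, hi⟩ := hex
  have hl : ∀ j, c j ≠ 0 → ev j = l := fun j hj =>
    sub_eq_zero.1 ((mul_eq_zero.1 (hz j)).resolve_left hj)
  refine ⟨i, c i, (hl i hi).symm, ?_⟩
  rw [← hc]
  refine Finset.sum_eq_single i (fun j _ hj => ?_) (by simp)
  have : c j = 0 := by
    by_contra hne
    exact hj (hev ((hl j hne).trans (hl i hi).symm))
  rw [this, zero_smul]

lemma star_mulVec_map {n : ℕ} (C : Matrix (Fin n) (Fin n) ℂ) (v : Fin n → ℂ) :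
    star (C.mulVec v) = (C.map (starRingEnd ℂ)).mulVec (star v) := by
  ext i
  simp [Matrix.mulVec, dotProduct]

/-- If `B = A⁻¹ conj(A⁻¹)` has `n` pairwise distinct eigenvalues
with eigenvectors `w⁽¹⁾, …, w⁽ⁿ⁾`, the variety of contacts
`Σ = {z : ∃ μ, A z = μ conj z}` is the union of the lines `ℂ·w⁽ⁱ⁾` and `0`. -/
theorem stmt5 {n : ℕ} (A : Matrix (Fin n) (Fin n) ℂ)
    (hA : A.IsSymm) (hdet : A.det ≠ 0)
    (ev : Fin n → ℂ) (hev : Function.Injective ev)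
    (w : Fin n → Fin n → ℂ) (hw : ∀ i, w i ≠ 0)
    (heig : ∀ i, (A⁻¹ * (A⁻¹).map (starRingEnd ℂ)).mulVec (w i) = ev i • w i) :
    {z : Fin n → ℂ | ∃ μ : ℂ, A.mulVec z = μ • star z}
      = (⋃ i, {z : Fin n → ℂ | ∃ t : ℂ, z = t • w i}) ∪ {0} := by
  have hu : IsUnit A.det := isUnit_iff_ne_zero.2 hdet
  have hAC : A * A⁻¹ = 1 := Matrix.mul_nonsing_inv A hu
  have hCA : A⁻¹ * A = 1 := Matrix.nonsing_inv_mul A hu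
  have hC : (A⁻¹).IsSymm := by
    unfold Matrix.IsSymm
    rw [Matrix.transpose_nonsing_inv, hA.eq]
  generalize A⁻¹ = C at *
  have hB : ∀ v, (C * C.map (starRingEnd ℂ)).mulVec v
      = C.mulVec (star (C.mulVec (star v))) := by
    intro v
    rw [star_mulVec_map, star_star, Matrix.mulVec_mulVec]
  have hCinj : ∀ v, C.mulVec v = 0 → v = 0 := by
    intro v hv
    have : A.mulVec (C.mulVec v) = v := by rw [Matrix.mulVec_mulVec, hAC, Matrix.one_mulVec]
    rw [← this, hv, Matrix.mulVec_zero]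
  ext z
  simp only [Set.mem_ofPred_eq, Set.mem_union, Set.mem_iUnion, Set.mem_singleton_iff]
  constructor
  · rintro ⟨μ, hμ⟩
    by_cases hz : z = 0
    · exact Or.inr hz
    left
    have h1 : z = μ • C.mulVec (star z) := by
      rw [← Matrix.mulVec_smul, ← hμ, Matrix.mulVec_mulVec, hCA, Matrix.one_mulVec]
    have hμ0 : μ ≠ 0 := by
      rintro rfl
      exact hz (by rw [h1, zero_smul])
    have h2 : C.mulVec (star z) = μ⁻¹ • z := by
      conv_rhs => rw [h1]
      rw [smul_smul, inv_mul_cancel₀ hμ0, one_smul]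
    obtain ⟨i, t, -, ht⟩ := eig_aux _ ev hev w hw heig z hz (star μ⁻¹ * μ⁻¹) (by
      rw [hB, h2, star_smul, Matrix.mulVec_smul, h2, smul_smul])
    exact ⟨i, t, ht⟩
  · rintro (⟨i, t, rfl⟩ | rfl)
    · have hreal : star (ev i) = ev i := by
        have hH : (C * C.map (starRingEnd ℂ)).IsHermitian := by
          have : C.map (starRingEnd ℂ) = C.conjTranspose := by
            conv_rhs => rw [← hC.eq]
            ext a b
            simp [Matrix.conjTranspose_apply]
          rw [this]
          exact Matrix.isHermitian_mul_conjTranspose_self C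
        have e1 : star (w i) ⬝ᵥ ((C * C.map (starRingEnd ℂ)).mulVec (w i))
            = ev i * (star (w i) ⬝ᵥ w i) := by
          rw [heig i, dotProduct_smul, smul_eq_mul]
        have e2 : star (w i) ⬝ᵥ ((C * C.map (starRingEnd ℂ)).mulVec (w i))
            = star (ev i) * (star (w i) ⬝ᵥ w i) := by
          rw [Matrix.dotProduct_mulVec, ← hH.eq, ← Matrix.star_mulVec, heig i, star_smul,
            smul_dotProduct, smul_eq_mul]
        have hne : star (w i) ⬝ᵥ w i ≠ 0 := by
          open scoped ComplexOrder in
          exact fun h0 => hw i (dotProduct_star_self_eq_zero.1 h0)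
        exact mul_right_cancel₀ hne (e2.symm.trans e1)
      have hv0 : C.mulVec (star (w i)) ≠ 0 := fun h0 => hw i (star_eq_zero.1 (hCinj _ h0))
      obtain ⟨j, c, hj, hc⟩ := eig_aux _ ev hev w hw heig (C.mulVec (star (w i))) hv0 (ev i) (by
        rw [hB, ← hB (w i), heig i, star_smul, hreal, Matrix.mulVec_smul])
      obtain rfl := hev hj
      have hc0 : c ≠ 0 := by
        rintro rfl
        exact hv0 (by rw [hc, zero_smul])
      have hs : star (w i) = c • A.mulVec (w i) := by
        rw [← Matrix.mulVec_smul, ← hc, Matrix.mulVec_mulVec, hAC, Matrix.one_mulVec]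
      by_cases ht : t = 0
      · exact ⟨0, by simp [ht]⟩
      refine ⟨t * c⁻¹ * (star t)⁻¹, ?_⟩
      have hst : star t ≠ 0 := star_ne_zero.2 ht
      rw [star_smul, hs, Matrix.mulVec_smul, smul_smul, smul_smul]
      congr 1
      field_simp
    · exact ⟨0, by simp⟩
end

section
/- Let F be a continuous vector field on the closed unit disk D² ⊂ ℝ² with no zeros on the boundary circle S¹, having only nondegenerate interior zeros, and meeting S¹ generically (finitely many tangency points, each either an interior or exterior tangency, with no inflection tangencies). Then the sum of the indices of the zeros of F in D² equals 1 + (i − e)/2, where i is the number of interior tangencies and e the number of exterior tangencies of F with S¹. -/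
open scoped RealInnerProductSpace ComplexConjugate
open Filter Topology

namespace Poinc

theorem log_lift (G : ℂ → ℂ) (hG : ContinuousOn G (Metric.closedBall 0 1))
    (h0 : ∀ x ∈ Metric.closedBall (0:ℂ) 1, G x ≠ 0) :
    ∃ L : ℂ → ℂ, Continuous L ∧ ∀ x ∈ Metric.closedBall (0:ℂ) 1, G x = Complex.exp (L x) := by
  have isSC : IsSimplyConnected (Set.univ : Set ℂ) := by
    have : ContractibleSpace (Set.univ : Set ℂ) := convex_univ.contractibleSpace ⟨0, trivial⟩
    exact (inferInstance : SimplyConnectedSpace (Set.univ : Set ℂ))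
  let r : ℂ → ℂ := fun x => (max 1 ‖x‖)⁻¹ • x
  have hpos : ∀ x : ℂ, 0 < max 1 ‖x‖ := fun x => lt_of_lt_of_le one_pos (le_max_left _ _)
  have hr : Continuous r := by
    refine Continuous.smul (Continuous.inv₀ (by fun_prop) fun x => (hpos x).ne') continuous_id
  have hmem : ∀ x, r x ∈ Metric.closedBall (0:ℂ) 1 := by
    intro x
    simp only [mem_closedBall_zero_iff, r, norm_smul, norm_inv, Real.norm_eq_abs, abs_of_pos (hpos x)]
    rw [inv_mul_le_iff₀ (hpos x)]
    simp
  have hid : ∀ x ∈ Metric.closedBall (0:ℂ) 1, r x = x := by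
    intro x hx
    rw [mem_closedBall_zero_iff] at hx
    simp [r, max_eq_left hx]
  have hc : Continuous (fun x => G (r x)) := hG.comp_continuous hr hmem
  obtain ⟨f, hf, hfe⟩ := Complex.exists_continuousOn_eqOn_exp_comp (U := Set.univ) (g := fun x => G (r x))
    isSC isOpen_univ hc.continuousOn (by
      rintro ⟨x, -, hx⟩
      exact h0 _ (hmem x) hx)
  refine ⟨f, continuousOn_univ.1 hf, fun x hx => ?_⟩
  have := hfe (Set.mem_univ x)
  simp only [Function.comp_apply, hid x hx] at this
  exact this.symm

def LogAt (G : ℂ → ℂ) (p : ℂ) : Prop :=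
  ∃ L : ℂ → ℂ, ∀ᶠ x in 𝓝[≠] p, G x = Complex.exp (L x) ∧ ContinuousAt L x

theorem LogAt.congr {G H : ℂ → ℂ} {p : ℂ} (h : LogAt G p) (e : ∀ᶠ x in 𝓝[≠] p, H x = G x) :
    LogAt H p := by
  obtain ⟨L, hL⟩ := h
  refine ⟨L, ?_⟩
  filter_upwards [hL, e] with x h1 h2
  exact ⟨h2.trans h1.1, h1.2⟩

theorem logAt_of_near {w : ℂ → ℂ} {p c : ℂ} (h : ∀ᶠ x in 𝓝[≠] p, ‖w x - c‖ < ‖c‖)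
    (hw : ∀ᶠ x in 𝓝[≠] p, ContinuousAt w x) : LogAt w p := by
  refine ⟨fun x => Complex.log (w x / c) + Complex.log c, ?_⟩
  filter_upwards [h, hw] with x h1 h2
  have hc : c ≠ 0 := by
    rintro rfl
    simp at h1
    exact absurd h1 (not_lt.2 (norm_nonneg _))
  have hs : w x / c ∈ Complex.slitPlane := by
    have : w x / c = 1 + (w x - c) / c := by field_simp; ring
    rw [this]
    apply Complex.mem_slitPlane_of_norm_lt_one
    rw [norm_div, div_lt_one (norm_pos_iff.2 hc)]
    exact h1
  refine ⟨?_, ?_⟩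
  · rw [Complex.exp_add, Complex.exp_log (Complex.slitPlane_ne_zero hs), Complex.exp_log hc]
    field_simp
  · exact ((h2.div_const c).clog hs).add continuousAt_const

theorem LogAt.mul {G H : ℂ → ℂ} {p : ℂ} (h : LogAt G p) (h' : LogAt H p) :
    LogAt (fun x => G x * H x) p := by
  obtain ⟨L, hL⟩ := h
  obtain ⟨M, hM⟩ := h'
  refine ⟨fun x => L x + M x, ?_⟩
  filter_upwards [hL, hM] with x h1 h2
  exact ⟨by rw [h1.1, h2.1, Complex.exp_add], h1.2.add h2.2⟩

theorem logAt_of_cont {u : ℂ → ℂ} {p : ℂ} (h : ∀ᶠ x in 𝓝 p, ContinuousAt u x) (h0 : u p ≠ 0) :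
    LogAt u p := by
  refine logAt_of_near (c := u p) ?_ (h.filter_mono nhdsWithin_le_nhds)
  have : ContinuousAt (fun x => ‖u x - u p‖) p := (h.self_of_nhds.sub continuousAt_const).norm
  have h2 : ∀ᶠ x in 𝓝 p, ‖u x - u p‖ < ‖u p‖ := by
    apply this.eventually_lt continuousAt_const
    simpa using h0
  exact h2.filter_mono nhdsWithin_le_nhds

theorem log_sphere (Z : Finset ℂ) : ∀ G : ℂ → ℂ, (∀ p ∈ Z, p ∈ Metric.ball (0:ℂ) 1) →
    ContinuousOn G (Metric.closedBall 0 1 \ Z) →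
    (∀ x ∈ Metric.closedBall (0:ℂ) 1 \ Z, G x ≠ 0) → (∀ p ∈ Z, LogAt G p) →
    ∃ L : ℂ → ℂ, Continuous L ∧ ∀ x ∈ Metric.sphere (0:ℂ) 1, G x = Complex.exp (L x) := by
  classical
  induction Z using Finset.induction_on with
  | empty =>
    intro G _ hc h0 _
    simp only [Finset.coe_empty, Set.sdiff_empty] at hc h0
    obtain ⟨L, hL, h⟩ := log_lift G hc h0
    exact ⟨L, hL, fun x hx => h x (Metric.sphere_subset_closedBall hx)⟩
  | insert p Z hp ih =>
    intro G hZ hc h0 hlog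
    obtain ⟨L, hL⟩ := hlog p (by simp)
    have hZ' : ∀ᶠ x in 𝓝[≠] p, x ∉ Z := by
      refine Filter.Eventually.filter_mono nhdsWithin_le_nhds ?_
      exact Z.finite_toSet.isClosed.isOpen_compl.mem_nhds (by simpa using hp)
    have hb : ∀ᶠ x in 𝓝[≠] p, x ∈ Metric.ball (0:ℂ) 1 :=
      Filter.Eventually.filter_mono nhdsWithin_le_nhds
        (Metric.isOpen_ball.mem_nhds (hZ p (by simp)))
    obtain ⟨r, hr, hball⟩ := Metric.eventually_nhds_iff_ball.1
      (eventually_nhdsWithin_iff.1 (hL.and (hZ'.and hb)))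
    let χ : ℂ → ℝ := fun x => max 0 (min 1 (4 * dist x p / r - 1))
    have hχ : Continuous χ := by fun_prop
    have hχ0 : ∀ x, dist x p < r / 4 → χ x = 0 := by
      intro x hx
      apply max_eq_left
      apply (min_le_right _ _).trans
      have : 4 * dist x p / r ≤ 1 := by rw [div_le_one hr]; linarith
      linarith
    have hχ1 : ∀ x, r / 2 < dist x p → χ x = 1 := by
      intro x hx
      have : 2 ≤ 4 * dist x p / r := by rw [le_div_iff₀ hr]; linarith
      have h2 : min 1 (4 * dist x p / r - 1) = 1 := min_eq_left (by linarith)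
      simp only [χ, h2]; norm_num
    let H : ℂ → ℂ := fun x => if dist x p < r then Complex.exp (χ x * L x) else G x
    have hHG : ∀ x, r / 2 < dist x p → H x = G x := by
      intro x hx
      by_cases h : dist x p < r
      · have := (hball x h (by rintro rfl; simp at hx; linarith)).1.1
        simp [H, h, hχ1 x hx, this]
      · simp [H, h]
    have hHGe : ∀ x, r / 2 < dist x p → H =ᶠ[𝓝 x] G := by
      intro x hx
      have : ∀ᶠ y in 𝓝 x, r / 2 < dist y p :=
        (isOpen_lt continuous_const (by fun_prop : Continuous fun y => dist y p)).mem_nhds hx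
      filter_upwards [this] with y hy using hHG y hy
    have hZd : ∀ q ∈ Z, r ≤ dist q p := by
      intro q hq
      by_contra hlt
      push Not at hlt
      exact (hball q hlt (by rintro rfl; exact hp hq)).2.1 hq
    have hex : ∃ M : ℂ → ℂ, Continuous M ∧ ∀ x ∈ Metric.sphere (0:ℂ) 1, H x = Complex.exp (M x) := by
      refine ih H (fun q hq => hZ q (by simp [hq])) ?_ ?_ ?_
      · intro x hx
        by_cases h1 : r / 2 < dist x p
        · refine ContinuousWithinAt.congr_of_eventuallyEq ?_ ((hHGe x h1).filter_mono nhdsWithin_le_nhds)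
            (hHG x h1)
          have hxp : x ≠ p := by
            rintro rfl; simp at h1; linarith
          have := hc x ⟨hx.1, by simpa [hxp] using hx.2⟩
          refine this.mono_of_mem_nhdsWithin ?_
          have h3 : ∀ᶠ y in 𝓝[Metric.closedBall 0 1 \ (Z:Set ℂ)] x, y ≠ p :=
            Filter.Eventually.filter_mono nhdsWithin_le_nhds (isOpen_ne.mem_nhds hxp)
          filter_upwards [h3, self_mem_nhdsWithin] with y hy1 hy2
          exact ⟨hy2.1, by simpa [hy1] using hy2.2⟩
        · have hlt : dist x p < r := by linarith
          apply ContinuousAt.continuousWithinAt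
          by_cases hxp : x = p
          · have : H =ᶠ[𝓝 x] fun _ => 1 := by
              filter_upwards [Metric.ball_mem_nhds x (by positivity : 0 < r / 4)] with y hy
              rw [hxp, Metric.mem_ball] at hy
              have : dist y p < r := by linarith
              simp [H, this, hχ0 y hy]
            exact continuousAt_const.congr this.symm
          · have : H =ᶠ[𝓝 x] fun y => Complex.exp (χ y * L y) := by
              filter_upwards [Metric.isOpen_ball.mem_nhds (show x ∈ Metric.ball p r from hlt)] with y hy
              have : dist y p < r := hy
              simp [H, this]
            refine ContinuousAt.congr ?_ this.symm
            have hLx := (hball x hlt hxp).1.2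
            exact ((Complex.continuous_ofReal.comp hχ).continuousAt.mul hLx).cexp
      · intro x hx
        by_cases h : dist x p < r
        · simp [H, h]
        · simp only [H, h, if_false]
          apply h0
          refine ⟨hx.1, ?_⟩
          have : x ≠ p := by rintro rfl; simp at h; linarith
          simpa [this] using hx.2
      · intro q hq
        refine (hlog q (by simp [hq])).congr ?_
        exact (hHGe q (by linarith [hZd q hq])).filter_mono nhdsWithin_le_nhds
    obtain ⟨M, hM, hMe⟩ := hex
    refine ⟨M, hM, fun x hx => ?_⟩
    rw [← hMe x hx, hHG]
    by_contra hlt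
    have hlt' : dist x p < r := by linarith
    have hxp : x ≠ p := by
      rintro rfl
      have := hZ x (by simp)
      simp at this hx
      linarith
    have := (hball x hlt' hxp).2.2
    simp at this hx
    linarith

theorem crossing {ι : Type*} (Γ : Finset ι) (τ : ι → ℝ) (s : ι → ℤ) (α β : ℝ)
    (hτ : ∀ i ∈ Γ, τ i ∈ Set.Ioo α β) (hαβ : α < β) (hinj : Set.InjOn τ Γ)
    (ψ : ℝ → ℝ) (hψ : Continuous ψ)
    (hz : ∀ t ∈ Set.Icc α β, ∀ n : ℤ, ψ t = n → ∃ i ∈ Γ, τ i = t)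
    (hn : ∀ i ∈ Γ, ∃ n : ℤ, ψ (τ i) = n)
    (hup : ∀ i ∈ Γ, (s i = 1 ∧ ∀ᶠ t in 𝓝[≠] τ i, 0 < (ψ t - ψ (τ i)) * (t - τ i)) ∨
      (s i = -1 ∧ ∀ᶠ t in 𝓝[≠] τ i, (ψ t - ψ (τ i)) * (t - τ i) < 0)) :
    ⌊ψ β⌋ + ⌈ψ β⌉ - (⌊ψ α⌋ + ⌈ψ α⌉) = 2 * ∑ i ∈ Γ, s i := by
  classical
  let K : ℝ → ℤ := fun t => ⌊ψ t⌋ + ⌈ψ t⌉ - ∑ i ∈ Γ, s i * (SignType.sign (t - τ i) : ℤ)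
  have sgn : ∀ i t, t ≠ τ i → ∀ᶠ u in 𝓝 t, SignType.sign (u - τ i) = SignType.sign (t - τ i) := by
    intro i t h
    rcases lt_or_gt_of_ne h with h | h
    · filter_upwards [gt_mem_nhds h] with u hu
      rw [sign_neg (by linarith), sign_neg (by linarith)]
    · filter_upwards [lt_mem_nhds h] with u hu
      rw [sign_pos (by linarith), sign_pos (by linarith)]
  have hK : ContinuousOn K (Set.Icc α β) := by
    intro t ht
    apply ContinuousAt.continuousWithinAt
    have key : ∀ᶠ u in 𝓝 t, K u = K t := by
      by_cases hint : ∃ n : ℤ, ψ t = n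
      · obtain ⟨n, hn'⟩ := hint
        obtain ⟨i, hi, rfl⟩ := hz t ht n hn'
        have e1 : ∀ᶠ u in 𝓝 (τ i), ∀ j ∈ Γ.erase i,
            SignType.sign (u - τ j) = SignType.sign (τ i - τ j) := by
          rw [Filter.eventually_all_finset]
          intro j hj
          apply sgn
          intro h
          exact (Finset.ne_of_mem_erase hj) (hinj (Finset.mem_of_mem_erase hj) hi h.symm)
        have e2 : ∀ᶠ u in 𝓝 (τ i), |ψ u - n| < 1 := by
          have : ContinuousAt (fun u => |ψ u - n|) (τ i) := by fun_prop
          apply this.eventually_lt continuousAt_const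
          simp [hn']
        have fl : ∀ y : ℝ, |y - n| < 1 → 0 < y - n → ⌊y⌋ + ⌈y⌉ = 2 * n + 1 := by
          intro y h1 h2
          rw [abs_lt] at h1
          have a : ⌊y⌋ = n := by rw [Int.floor_eq_iff]; constructor <;> linarith
          have b : ⌈y⌉ = n + 1 := by rw [Int.ceil_eq_iff]; push_cast; constructor <;> linarith
          rw [a, b]; ring
        have fl' : ∀ y : ℝ, |y - n| < 1 → y - n < 0 → ⌊y⌋ + ⌈y⌉ = 2 * n - 1 := by
          intro y h1 h2
          rw [abs_lt] at h1
          have a : ⌊y⌋ = n - 1 := by rw [Int.floor_eq_iff]; push_cast; constructor <;> linarith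
          have b : ⌈y⌉ = n := by rw [Int.ceil_eq_iff]; constructor <;> linarith
          rw [a, b]; ring
        have kt : K (τ i) = 2 * n - ∑ j ∈ Γ.erase i, s j * (SignType.sign (τ i - τ j) : ℤ) := by
          simp only [K]
          rw [← Finset.add_sum_erase Γ _ hi, hn']
          simp; ring
        rcases hup i hi with ⟨hs, hu⟩ | ⟨hs, hu⟩
        all_goals
          filter_upwards [e1, e2, eventually_nhdsWithin_iff.1 hu] with u h1 h2 h3
          by_cases hut : u = τ i
          · rw [hut]
          specialize h3 hut
          rw [kt]
          simp only [K]
          rw [← Finset.add_sum_erase Γ _ hi, hs,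
            Finset.sum_congr rfl (fun j hj => by rw [h1 j hj])]
          rw [hn'] at h3
          rcases lt_or_gt_of_ne hut with h | h
          · rw [sign_neg (by linarith)]
            first
            | rw [fl' _ h2 (by nlinarith)]; simp; ring
            | rw [fl _ h2 (by nlinarith)]; simp; ring
          · rw [sign_pos (by linarith)]
            first
            | rw [fl' _ h2 (by nlinarith)]; simp; ring
            | rw [fl _ h2 (by nlinarith)]; simp; ring
      · push Not at hint
        have e1 : ∀ᶠ u in 𝓝 t, ∀ j ∈ Γ,
            SignType.sign (u - τ j) = SignType.sign (t - τ j) := by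
          rw [Filter.eventually_all_finset]
          intro j hj
          apply sgn
          rintro rfl
          obtain ⟨n, h⟩ := hn j hj
          exact hint n h
        have l1 : (⌊ψ t⌋ : ℝ) < ψ t := lt_of_le_of_ne (Int.floor_le _) (fun h => hint _ h.symm)
        have l2 : ψ t < ⌊ψ t⌋ + 1 := Int.lt_floor_add_one _
        have e2 : ∀ᶠ u in 𝓝 t, ψ u ∈ Set.Ioo (⌊ψ t⌋ : ℝ) (⌊ψ t⌋ + 1) :=
          hψ.continuousAt.eventually_mem (isOpen_Ioo.mem_nhds ⟨l1, l2⟩)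
        have fl : ∀ y ∈ Set.Ioo (⌊ψ t⌋ : ℝ) (⌊ψ t⌋ + 1), ⌊y⌋ + ⌈y⌉ = 2 * ⌊ψ t⌋ + 1 := by
          intro y hy
          have a : ⌊y⌋ = ⌊ψ t⌋ := by rw [Int.floor_eq_iff]; exact ⟨hy.1.le, hy.2⟩
          have b : ⌈y⌉ = ⌊ψ t⌋ + 1 := by
            rw [Int.ceil_eq_iff]; push_cast; constructor <;> linarith [hy.1, hy.2]
          rw [a, b]; ring
        filter_upwards [e1, e2] with u h1 h2
        simp only [K]
        rw [fl _ h2, fl _ ⟨l1, l2⟩, Finset.sum_congr rfl (fun j hj => by rw [h1 j hj])]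
    exact continuousAt_const.congr (by filter_upwards [key] with u hu using hu.symm)
  have := isPreconnected_Icc.constant hK (Set.left_mem_Icc.2 hαβ.le) (Set.right_mem_Icc.2 hαβ.le)
  simp only [K] at this
  have sα : ∑ i ∈ Γ, s i * (SignType.sign (α - τ i) : ℤ) = - ∑ i ∈ Γ, s i := by
    rw [← Finset.sum_neg_distrib]
    refine Finset.sum_congr rfl fun i hi => ?_
    rw [sign_neg (by linarith [(hτ i hi).1])]; simp
  have sβ : ∑ i ∈ Γ, s i * (SignType.sign (β - τ i) : ℤ) = ∑ i ∈ Γ, s i := by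
    refine Finset.sum_congr rfl fun i hi => ?_
    rw [sign_pos (by linarith [(hτ i hi).2])]; simp
  rw [sα, sβ] at this
  linarith

end Poinc
namespace Poinc

theorem clm_apply (A : ℂ →L[ℝ] ℂ) (v : ℂ) :
    A v = (A 1 - Complex.I * A Complex.I) / 2 * v + (A 1 + Complex.I * A Complex.I) / 2 * conj v := by
  have h : A v = v.re • A 1 + v.im • A Complex.I := by
    rw [← map_smul, ← map_smul, ← map_add]
    congr 1
    apply Complex.ext <;> simp
  rw [h]
  apply Complex.ext <;> simp <;> ring

theorem clm_det (A : ℂ →L[ℝ] ℂ) :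
    A.det = ‖(A 1 - Complex.I * A Complex.I) / 2‖ ^ 2 - ‖(A 1 + Complex.I * A Complex.I) / 2‖ ^ 2 := by
  have h : A.det = (A 1).re * (A Complex.I).im - (A Complex.I).re * (A 1).im := by
    rw [ContinuousLinearMap.det, ← LinearMap.det_toMatrix Complex.basisOneI, Matrix.det_fin_two]
    simp [LinearMap.toMatrix_apply]
  rw [h, ← Complex.normSq_eq_norm_sq, ← Complex.normSq_eq_norm_sq, Complex.normSq_apply,
    Complex.normSq_apply]
  simp
  ring

theorem local_log {f : ℂ → ℂ} (hf : Continuous f) {A : ℂ →L[ℝ] ℂ} {p a b : ℂ}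
    {k m : ℂ → ℂ} (hk : Continuous k)
    (hkn : ∀ v, ‖k v‖ = ‖v‖) (hmn : ∀ v, ‖m v‖ = ‖v‖)
    (hA : HasFDerivAt f A p) (h0 : f p = 0) (hAv : ∀ v, A v = a * k v + b * m v)
    (hab : ‖b‖ < ‖a‖) : LogAt (fun x => f x / k (x - p)) p := by
  have hk0 : ∀ x, x ≠ p → k (x - p) ≠ 0 := by
    intro x hx
    rw [← norm_ne_zero_iff, hkn, norm_ne_zero_iff]
    exact sub_ne_zero.2 hx
  refine logAt_of_near (c := a) ?_ ?_
  · have ho := hA.isLittleO.def (show 0 < (‖a‖ - ‖b‖) / 2 by linarith)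
    filter_upwards [ho.filter_mono nhdsWithin_le_nhds, self_mem_nhdsWithin] with x h1 hx
    have hk' := hk0 x hx
    have hv : 0 < ‖x - p‖ := norm_pos_iff.2 (sub_ne_zero.2 hx)
    have : f x / k (x - p) - a = (f x - a * k (x - p)) / k (x - p) := by field_simp
    rw [this, norm_div, hkn, div_lt_iff₀ hv]
    have e : f x - a * k (x - p) = (f x - f p - A (x - p)) + b * m (x - p) := by
      rw [hAv, h0]; ring
    rw [e]
    have := norm_add_le (f x - f p - A (x - p)) (b * m (x - p))
    rw [norm_mul, hmn] at this
    nlinarith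
  · filter_upwards [self_mem_nhdsWithin] with x hx
    exact hf.continuousAt.div (hk.comp (continuous_id.sub continuous_const)).continuousAt (hk0 x hx)

/-- local model of a zero -/
noncomputable def mdl (d : ℂ → ℝ) (p x : ℂ) : ℂ := if 0 < d p then x - p else conj (x - p)

theorem mdl_cont (d : ℂ → ℝ) (p : ℂ) : Continuous (mdl d p) := by
  unfold mdl
  split_ifs
  · fun_prop
  · exact Complex.continuous_conj.comp (by fun_prop)

theorem mdl_ne (d : ℂ → ℝ) {p x : ℂ} (h : x ≠ p) : mdl d p x ≠ 0 := by
  unfold mdl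
  split_ifs
  · exact sub_ne_zero.2 h
  · exact (map_ne_zero _).2 (sub_ne_zero.2 h)

theorem local_log' {f : ℂ → ℂ} (hf : Continuous f) {A : ℂ →L[ℝ] ℂ} {p : ℂ} (d : ℂ → ℝ)
    (hA : HasFDerivAt f A p) (h0 : f p = 0) (hd : A.det = d p) (hne : d p ≠ 0) :
    LogAt (fun x => f x / mdl d p x) p := by
  have hdet := clm_det A
  rw [hd] at hdet
  unfold mdl
  split_ifs with h
  · refine local_log hf (k := fun v => v) (m := conj) continuous_id (fun _ => rfl) (by simp) hA h0
      (clm_apply A) ?_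
    apply lt_of_pow_lt_pow_left₀ 2 (norm_nonneg _)
    linarith
  · refine local_log hf (m := fun v => v) (k := conj) Complex.continuous_conj (by simp)
      (fun _ => rfl) hA h0 (fun v => (clm_apply A v).trans (add_comm _ _)) ?_
    apply lt_of_pow_lt_pow_left₀ 2 (norm_nonneg _)
    have : d p < 0 := lt_of_le_of_ne (not_lt.1 h) hne
    linarith

theorem mdl_sphere (d : ℂ → ℝ) {p : ℂ} (hp : p ∈ Metric.ball (0:ℂ) 1) :
    ∃ M : ℂ → ℂ, ContinuousOn M (Metric.sphere 0 1) ∧ ∀ x ∈ Metric.sphere (0:ℂ) 1,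
      mdl d p x = x ^ (if 0 < d p then (1:ℤ) else -1) * Complex.exp (M x) := by
  have hp' : ‖p‖ < 1 := by simpa using hp
  have hx1 : ∀ x ∈ Metric.sphere (0:ℂ) 1, x * conj x = 1 := by
    intro x hx
    have : ‖x‖ = 1 := by simpa using hx
    rw [Complex.mul_conj, Complex.normSq_eq_norm_sq, this]; simp
  unfold mdl
  split_ifs
  · have hs : ∀ x ∈ Metric.sphere (0:ℂ) 1, 1 + -(p * conj x) ∈ Complex.slitPlane := by
      intro x hx
      apply Complex.mem_slitPlane_of_norm_lt_one
      have : ‖x‖ = 1 := by simpa using hx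
      simpa [this] using hp'
    refine ⟨fun x => Complex.log (1 + -(p * conj x)), ?_, ?_⟩
    · refine ContinuousOn.clog ?_ hs
      have := Complex.continuous_conj
      exact Continuous.continuousOn (by fun_prop)
    · intro x hx
      rw [Complex.exp_log (Complex.slitPlane_ne_zero (hs x hx)), zpow_one]
      linear_combination (p) * hx1 x hx
  · have hs : ∀ x ∈ Metric.sphere (0:ℂ) 1, 1 + -(conj p * x) ∈ Complex.slitPlane := by
      intro x hx
      apply Complex.mem_slitPlane_of_norm_lt_one
      have : ‖x‖ = 1 := by simpa using hx
      simpa [this] using hp'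
    refine ⟨fun x => Complex.log (1 + -(conj p * x)), ?_, ?_⟩
    · refine ContinuousOn.clog ?_ hs
      exact Continuous.continuousOn (by fun_prop)
    · intro x hx
      have h0 : x ≠ 0 := left_ne_zero_of_mul_eq_one (hx1 x hx)
      rw [Complex.exp_log (Complex.slitPlane_ne_zero (hs x hx)), zpow_neg, zpow_one]
      field_simp
      rw [map_sub]
      linear_combination hx1 x hx

theorem prod_sphere (d : ℂ → ℝ) (Z : Finset ℂ) (hZ : ∀ p ∈ Z, p ∈ Metric.ball (0:ℂ) 1) :
    ∃ M : ℂ → ℂ, ContinuousOn M (Metric.sphere 0 1) ∧ ∀ x ∈ Metric.sphere (0:ℂ) 1,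
      ∏ p ∈ Z, mdl d p x = x ^ (∑ p ∈ Z, if 0 < d p then (1:ℤ) else -1) * Complex.exp (M x) := by
  classical
  induction Z using Finset.induction_on with
  | empty => exact ⟨fun _ => 0, continuousOn_const, by simp⟩
  | insert p Z hp ih =>
    obtain ⟨M, hM, hM'⟩ := ih (fun q hq => hZ q (by simp [hq]))
    obtain ⟨Q, hQ, hQ'⟩ := mdl_sphere d (hZ p (by simp))
    refine ⟨fun x => Q x + M x, hQ.add hM, fun x hx => ?_⟩
    have h0 : x ≠ 0 := by rintro rfl; simp at hx
    rw [Finset.prod_insert hp, Finset.sum_insert hp, hM' x hx, hQ' x hx, zpow_add₀ h0,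
      Complex.exp_add]
    ring

theorem winding (f : ℂ → ℂ) (hf : Continuous f) (f' : ℂ → ℂ →L[ℝ] ℂ)
    (hf' : ∀ x, HasFDerivAt f (f' x) x)
    (hfb : ∀ x ∈ Metric.sphere (0:ℂ) 1, f x ≠ 0) (Z : Finset ℂ)
    (hZ : ∀ x, x ∈ Z ↔ x ∈ Metric.closedBall (0:ℂ) 1 ∧ f x = 0)
    (hnd : ∀ p ∈ Z, (f' p).det ≠ 0) :
    ∃ M : ℂ → ℂ, ContinuousOn M (Metric.sphere 0 1) ∧ ∀ x ∈ Metric.sphere (0:ℂ) 1,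
      f x = x ^ (∑ p ∈ Z, if 0 < (f' p).det then (1:ℤ) else -1) * Complex.exp (M x) := by
  classical
  let d : ℂ → ℝ := fun p => (f' p).det
  have hZb : ∀ p ∈ Z, p ∈ Metric.ball (0:ℂ) 1 := by
    intro p hp
    have h := (hZ p).1 hp
    rw [Metric.mem_ball]
    refine lt_of_le_of_ne h.1 (fun h1 => hfb p h1 h.2)
  have hPc : ∀ W : Finset ℂ, Continuous (fun x => ∏ p ∈ W, mdl d p x) :=
    fun W => continuous_finsetProd _ fun p _ => mdl_cont d p
  have hP0 : ∀ W : Finset ℂ, ∀ x, x ∉ W → ∏ p ∈ W, mdl d p x ≠ 0 := by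
    intro W x hx
    refine Finset.prod_ne_zero_iff.2 fun p hp => mdl_ne d ?_
    rintro rfl
    exact hx hp
  obtain ⟨L, hL, hL'⟩ := log_sphere Z (fun x => f x / ∏ p ∈ Z, mdl d p x) hZb
    (ContinuousOn.div hf.continuousOn (hPc Z).continuousOn (fun x hx => hP0 Z x hx.2))
    (fun x hx => div_ne_zero (fun h => hx.2 ((hZ x).2 ⟨hx.1, h⟩)) (hP0 Z x hx.2))
    (by
      intro p hp
      have h1 := local_log' hf d (hf' p) ((hZ p).1 hp).2 rfl (hnd p hp)
      have h2 : LogAt (fun x => (∏ q ∈ Z.erase p, mdl d q x)⁻¹) p := by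
        have hpp := hP0 (Z.erase p) p (by simp)
        refine logAt_of_cont ?_ (inv_ne_zero hpp)
        filter_upwards [(hPc (Z.erase p)).continuousAt.eventually_ne hpp] with x hx
        exact (hPc _).continuousAt.inv₀ hx
      refine (h1.mul h2).congr (Filter.Eventually.of_forall fun x => ?_)
      rw [← Finset.mul_prod_erase Z _ hp]
      rw [div_mul_eq_div_div, div_eq_mul_inv _ (∏ q ∈ Z.erase p, mdl d q x)])
  obtain ⟨Q, hQ, hQ'⟩ := prod_sphere d Z hZb
  refine ⟨fun x => L x + Q x, hL.continuousOn.add hQ, fun x hx => ?_⟩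
  have hxZ : x ∉ Z := fun h => hfb x hx ((hZ x).1 h).2
  have h1 := hL' x hx
  have h2 := hQ' x hx
  rw [div_eq_iff (hP0 Z x hxZ), h2] at h1
  rw [h1, Complex.exp_add]
  ring

theorem cross_local {a R θ : ℝ → ℝ} {τ a' : ℝ} (ha : ∀ t, a t = R t * Real.cos (θ t))
    (hR : ∀ t, 0 < R t) (hθ : Continuous θ) (hc : Real.cos (θ τ) = 0) (hd : HasDerivAt a a' τ) :
    (0 < a' * Real.sin (θ τ) → ∀ᶠ t in 𝓝[≠] τ, (θ t - θ τ) * (t - τ) < 0) ∧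
    (a' * Real.sin (θ τ) < 0 → ∀ᶠ t in 𝓝[≠] τ, 0 < (θ t - θ τ) * (t - τ)) := by
  have hsl := (hasDerivAt_iff_tendsto_slope.1 hd).mul_const (Real.sin (θ τ))
  have hδ : ∀ᶠ t in 𝓝[≠] τ, |θ t - θ τ| < Real.pi := by
    refine Filter.Eventually.filter_mono nhdsWithin_le_nhds ?_
    have : ContinuousAt (fun t => |θ t - θ τ|) τ := by fun_prop
    apply this.eventually_lt continuousAt_const
    simpa using Real.pi_pos
  have hs2 : Real.sin (θ τ) ^ 2 = 1 := by
    have := Real.sin_sq_add_cos_sq (θ τ)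
    rw [hc] at this; linarith
  have key : ∀ t, t ≠ τ → slope a τ t * Real.sin (θ τ) * (t - τ) = - (R t * Real.sin (θ t - θ τ)) := by
    intro t ht
    have h0 : t - τ ≠ 0 := sub_ne_zero.2 ht
    rw [slope_def_field, ha t, ha τ, hc, Real.sin_sub, hc]
    have : Real.cos (θ t) = Real.cos (θ t) * Real.sin (θ τ) ^ 2 := by rw [hs2, mul_one]
    field_simp
    ring
  have main : ∀ t, t ≠ τ → |θ t - θ τ| < Real.pi →
      (0 < slope a τ t * Real.sin (θ τ) → (θ t - θ τ) * (t - τ) < 0) ∧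
      (slope a τ t * Real.sin (θ τ) < 0 → 0 < (θ t - θ τ) * (t - τ)) := by
    intro t ht hb
    have hk := key t ht
    have hRt := hR t
    rw [abs_lt] at hb
    have hpos : ∀ (_ : 0 < Real.sin (θ t - θ τ)), 0 < θ t - θ τ := by
      intro h
      by_contra hn
      exact absurd h (not_lt.2 (Real.sin_nonpos_of_nonpos_of_neg_pi_le (by linarith) (by linarith)))
    have hneg : ∀ (_ : Real.sin (θ t - θ τ) < 0), θ t - θ τ < 0 := by
      intro h
      by_contra hn
      exact absurd h (not_lt.2 (Real.sin_nonneg_of_nonneg_of_le_pi (by linarith) (by linarith)))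
    have d1 : ∀ (_ : R t * Real.sin (θ t - θ τ) < 0), θ t - θ τ < 0 :=
      fun h => hneg (by by_contra hn; push Not at hn; exact absurd h (not_lt.2 (mul_nonneg hRt.le hn)))
    have d2 : ∀ (_ : 0 < R t * Real.sin (θ t - θ τ)), 0 < θ t - θ τ :=
      fun h => hpos ((mul_pos_iff_of_pos_left hRt).1 h)
    constructor
    · intro h
      rcases lt_or_gt_of_ne ht with h1 | h1
      · have : slope a τ t * Real.sin (θ τ) * (t - τ) < 0 := mul_neg_of_pos_of_neg h (by linarith)
        exact mul_neg_of_pos_of_neg (d2 (by linarith)) (by linarith)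
      · have : 0 < slope a τ t * Real.sin (θ τ) * (t - τ) := mul_pos h (by linarith)
        exact mul_neg_of_neg_of_pos (d1 (by linarith)) (by linarith)
    · intro h
      rcases lt_or_gt_of_ne ht with h1 | h1
      · have : 0 < slope a τ t * Real.sin (θ τ) * (t - τ) := mul_pos_of_neg_of_neg h (by linarith)
        exact mul_pos_of_neg_of_neg (d1 (by linarith)) (by linarith)
      · have : slope a τ t * Real.sin (θ τ) * (t - τ) < 0 := mul_neg_of_neg_of_pos h (by linarith)
        exact mul_pos (d2 (by linarith)) (by linarith)
  constructor
  · intro h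
    filter_upwards [hsl.eventually (lt_mem_nhds h), hδ, self_mem_nhdsWithin] with t h1 h2 h3
    exact (main t h3 h2).1 h1
  · intro h
    filter_upwards [hsl.eventually (gt_mem_nhds h), hδ, self_mem_nhdsWithin] with t h1 h2 h3
    exact (main t h3 h2).2 h1

end Poinc
namespace Poinc

theorem poincare_complex (f : ℂ → ℂ) (hf : Continuous f) (f' : ℂ → ℂ →L[ℝ] ℂ)
    (hf' : ∀ x, HasFDerivAt f (f' x) x)
    (hfb : ∀ x ∈ Metric.sphere (0:ℂ) 1, f x ≠ 0) (Z : Finset ℂ)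
    (hZ : ∀ x, x ∈ Z ↔ x ∈ Metric.closedBall (0:ℂ) 1 ∧ f x = 0)
    (hnd : ∀ p ∈ Z, (f' p).det ≠ 0)
    (Γi Γe : Finset ℂ) (hdisj : Disjoint Γi Γe)
    (hΓ : ∀ x, (x ∈ Γi ∨ x ∈ Γe) ↔ (x ∈ Metric.sphere (0:ℂ) 1 ∧ ⟪f x, x⟫ = 0))
    (hint : ∀ x ∈ Γi, ⟪f x, f x⟫ + ⟪f' x (f x), x⟫ < 0)
    (hext : ∀ x ∈ Γe, 0 < ⟪f x, f x⟫ + ⟪f' x (f x), x⟫) :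
    2 * (∑ p ∈ Z, if 0 < (f' p).det then (1:ℤ) else -1) = 2 + ((Γi.card : ℤ) - Γe.card) := by
  classical
  obtain ⟨M, hM, hM'⟩ := winding f hf f' hf' hfb Z hZ hnd
  set N : ℤ := ∑ p ∈ Z, if 0 < (f' p).det then (1:ℤ) else -1 with hN
  let X : ℝ → ℂ := fun t => Complex.exp (t * Complex.I)
  have hXs : ∀ t, X t ∈ Metric.sphere (0:ℂ) 1 := by
    intro t
    simp [X, Complex.norm_exp_ofReal_mul_I]
  have hXc : Continuous X := by fun_prop
  have hXd : ∀ t, HasDerivAt X (Complex.I * X t) t := by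
    intro t
    have h1 : HasDerivAt (fun t : ℝ => (t:ℂ) * Complex.I) (1 * Complex.I) t :=
      (Complex.ofRealCLM.hasDerivAt (x := t)).mul_const _
    have := h1.cexp
    simp only [one_mul] at this
    rw [mul_comm]
    exact this
  have hMc : Continuous (fun t => M (X t)) := hM.comp_continuous hXc hXs
  let θ : ℝ → ℝ := fun t => (N - 1) * t + (M (X t)).im
  let R : ℝ → ℝ := fun t => Real.exp (M (X t)).re
  have hθc : Continuous θ := by
    have := Complex.continuous_im.comp hMc
    simp only [θ]
    exact (continuous_const.mul continuous_id).add this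
  have hRpos : ∀ t, 0 < R t := fun t => Real.exp_pos _
  have hX1 : ∀ t, X t * conj (X t) = 1 := by
    intro t
    have : ‖X t‖ = 1 := by simpa using hXs t
    rw [Complex.mul_conj, Complex.normSq_eq_norm_sq, this]; simp
  have hX0 : ∀ t, X t ≠ 0 := fun t => Complex.exp_ne_zero _
  have hpolar : ∀ t, conj (X t) * f (X t) = R t * (Real.cos (θ t) + Real.sin (θ t) * Complex.I) := by
    intro t
    have e1 : conj (X t) = (X t)⁻¹ := eq_inv_of_mul_eq_one_right (hX1 t)
    have e2 : (R t : ℂ) * (Real.cos (θ t) + Real.sin (θ t) * Complex.I) =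
        Complex.exp ((M (X t)).re + θ t * Complex.I) := by
      rw [Complex.exp_add, Complex.exp_mul_I]; simp [R]
    have e3 : (X t) ^ N = X t * Complex.exp ((N - 1) * t * Complex.I) := by
      simp only [X]
      rw [← Complex.exp_int_mul, ← Complex.exp_add]
      congr 1; ring
    rw [hM' _ (hXs t), e1, e2, e3]
    rw [mul_assoc, inv_mul_cancel_left₀ (hX0 t), ← Complex.exp_add]
    congr 1
    apply Complex.ext <;> simp [θ]
  let a : ℝ → ℝ := fun t => ⟪f (X t), X t⟫
  have ha : ∀ t, a t = R t * Real.cos (θ t) := by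
    intro t
    have h := congrArg Complex.re (hpolar t)
    simp only [a]
    rw [real_inner_comm, Complex.inner, mul_comm, h]
    simp [-Complex.ofReal_cos, -Complex.ofReal_sin]
  have hfX : ∀ t, f (X t) = X t * (R t * (Real.cos (θ t) + Real.sin (θ t) * Complex.I)) := by
    intro t
    rw [← hpolar t, ← mul_assoc, hX1, one_mul]
  have had : ∀ t, HasDerivAt a (⟪f (X t), Complex.I * X t⟫ + ⟪f' (X t) (Complex.I * X t), X t⟫) t := by
    intro t
    exact ((hf' (X t)).comp_hasDerivAt t (hXd t)).inner ℝ (hXd t)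
  have hsig : ∀ t, Real.cos (θ t) = 0 →
      (⟪f (X t), Complex.I * X t⟫ + ⟪f' (X t) (Complex.I * X t), X t⟫) * Real.sin (θ t) * R t
        = ⟪f (X t), f (X t)⟫ + ⟪f' (X t) (f (X t)), X t⟫ := by
    intro t hc
    have e : f (X t) = (R t * Real.sin (θ t)) • (Complex.I * X t) := by
      rw [hfX t, hc, Complex.real_smul]; push_cast; ring
    have e2 : ⟪f (X t), f (X t)⟫ = (R t * Real.sin (θ t)) * ⟪f (X t), Complex.I * X t⟫ := by
      conv_lhs => rw [e]
      conv_rhs => rw [e]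
      rw [inner_smul_right]
    rw [e2]
    conv_rhs => rw [show f' (X t) (f (X t)) = (R t * Real.sin (θ t)) • f' (X t) (Complex.I * X t) by
      rw [← map_smul, ← e]]
    rw [real_inner_smul_left]
    ring
  let Γ := Γi ∪ Γe
  have hΓm : ∀ t, X t ∈ Γ ↔ Real.cos (θ t) = 0 := by
    intro t
    have : ⟪f (X t), X t⟫ = R t * Real.cos (θ t) := ha t
    rw [Finset.mem_union, hΓ, this]
    simp [hXs t, (hRpos t).ne', -mem_sphere_iff_norm]
  have hΓs : ∀ x ∈ Γ, ‖x‖ = 1 := by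
    intro x hx
    simpa using ((hΓ x).1 (Finset.mem_union.1 hx)).1
  -- base point
  obtain ⟨α, hα⟩ : ∃ α : ℝ, X α ∉ Γ := by
    by_contra hcon
    push Not at hcon
    have hinf : (Set.Ioc (-Real.pi) Real.pi).Infinite := Set.Ioc_infinite (by linarith [Real.pi_pos])
    refine hinf ((Γ.finite_toSet.subset ?_).of_finite_image (f := X) ?_)
    · rintro _ ⟨t, -, rfl⟩
      exact hcon t
    · intro s hs t ht hst
      have h1 := Complex.arg_exp_mul_I s
      have h2 := Complex.arg_exp_mul_I t
      have hst' : Complex.exp (s * Complex.I) = Complex.exp (t * Complex.I) := hst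
      rw [hst', h2] at h1
      have k1 : toIocMod Real.two_pi_pos (-Real.pi) t = t :=
        (toIocMod_eq_self _).2 (by convert! ht using 2; ring)
      have k2 : toIocMod Real.two_pi_pos (-Real.pi) s = s :=
        (toIocMod_eq_self _).2 (by convert! hs using 2; ring)
      rw [k1, k2] at h1
      exact h1.symm
  let τ : ℂ → ℝ := fun x => α + Real.pi + (-(x * conj (X α))).arg
  have hXτ : ∀ x ∈ Γ, X (τ x) = x := by
    intro x hx
    have hn : ‖-(x * conj (X α))‖ = 1 := by
      have : ‖X α‖ = 1 := by simpa using hXs α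
      simp [hΓs x hx, this]
    have h := Complex.norm_mul_exp_arg_mul_I (-(x * conj (X α)))
    rw [hn] at h
    have : X (τ x) = X α * Complex.exp (Real.pi * Complex.I) *
        Complex.exp ((-(x * conj (X α))).arg * Complex.I) := by
      simp only [X, τ]
      rw [← Complex.exp_add, ← Complex.exp_add]
      push_cast
      congr 1; ring
    rw [this, Complex.exp_pi_mul_I]
    simp only [Complex.ofReal_one, one_mul] at h
    rw [h]
    linear_combination x * hX1 α
  have hτm : ∀ x ∈ Γ, τ x ∈ Set.Ioo α (α + 2 * Real.pi) := by
    intro x hx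
    have h1 := Complex.neg_pi_lt_arg (-(x * conj (X α)))
    have h2 := Complex.arg_le_pi (-(x * conj (X α)))
    refine ⟨by simp only [τ]; linarith, lt_of_le_of_ne (by simp only [τ]; linarith) ?_⟩
    intro h
    apply hα
    have h3 := hXτ x hx
    rw [h] at h3
    have : X (α + 2 * Real.pi) = X α := by
      simp only [X]
      push_cast
      rw [add_mul, Complex.exp_add, Complex.exp_two_pi_mul_I, mul_one]
    rw [← this, h3]
    exact hx
  have hper : X (α + 2 * Real.pi) = X α := by
    simp only [X]
    push_cast
    rw [add_mul, Complex.exp_add, Complex.exp_two_pi_mul_I, mul_one]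
  let ψ : ℝ → ℝ := fun t => θ t / Real.pi + 1 / 2
  have hπ := Real.pi_pos
  have hψint : ∀ t, (∃ n : ℤ, ψ t = n) ↔ Real.cos (θ t) = 0 := by
    intro t
    rw [Real.cos_eq_zero_iff]
    constructor
    · rintro ⟨n, hn⟩
      refine ⟨n - 1, ?_⟩
      simp only [ψ] at hn
      field_simp at hn ⊢
      push_cast
      linarith
    · rintro ⟨k, hk⟩
      refine ⟨k + 1, ?_⟩
      simp only [ψ, hk]
      push_cast
      field_simp
      ring
  let s : ℂ → ℤ := fun x => if x ∈ Γi then 1 else -1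
  have hψd : ∀ t u, (ψ t - ψ u) * (t - u) = (θ t - θ u) * (t - u) / Real.pi := by
    intro t u
    simp only [ψ]; ring
  have hcr := crossing Γ τ s α (α + 2 * Real.pi) hτm (by linarith)
    (by
      intro x hx y hy hxy
      rw [← hXτ x hx, ← hXτ y hy, hxy]) ψ (by fun_prop)
    (by
      intro t ht n hn
      have hmem : X t ∈ Γ := (hΓm t).2 ((hψint t).1 ⟨n, hn⟩)
      refine ⟨X t, hmem, ?_⟩
      have h1 : Complex.exp (τ (X t) * Complex.I) = Complex.exp (t * Complex.I) := hXτ _ hmem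
      have h2 := hτm _ hmem
      rw [Complex.exp_eq_exp_iff_exists_int] at h1
      obtain ⟨k, hk⟩ := h1
      have h3 : τ (X t) = t + k * (2 * Real.pi) := by
        have := congrArg Complex.im hk
        simpa using this
      have hk0 : k = 0 := by
        have u1 : (k:ℝ) < 1 := by
          by_contra hn
          push Not at hn
          nlinarith [h2.1, h2.2, ht.1, ht.2]
        have u2 : (-1:ℝ) < k := by
          by_contra hn
          push Not at hn
          nlinarith [h2.1, h2.2, ht.1, ht.2]
        have u1' : k < 1 := by exact_mod_cast u1
        have u2' : -1 < k := by exact_mod_cast u2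
        omega
      rw [h3, hk0]; simp)
    (by
      intro x hx
      rw [hψint, ← hΓm, hXτ x hx]
      exact hx)
    (by
      intro x hx
      have hc : Real.cos (θ (τ x)) = 0 := by
        rw [← hΓm, hXτ x hx]; exact hx
      have hloc := cross_local ha hRpos hθc hc (had (τ x))
      have hs := hsig (τ x) hc
      rw [hXτ x hx] at hs hloc
      simp only [hψd]
      by_cases hi : x ∈ Γi
      · left
        refine ⟨by simp [s, hi], ?_⟩
        have h1 := hint x hi
        rw [← hs] at h1
        have := hloc.2 (neg_of_mul_neg_left h1 (hRpos _).le)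
        filter_upwards [this] with t ht
        exact div_pos ht hπ
      · right
        refine ⟨by simp [s, hi], ?_⟩
        have h1 := hext x ((Finset.mem_union.1 hx).resolve_left hi)
        rw [← hs] at h1
        have := hloc.1 (pos_of_mul_pos_left h1 (hRpos _).le)
        filter_upwards [this] with t ht
        exact div_neg_of_neg_of_pos ht hπ)
  have hψp : ψ (α + 2 * Real.pi) = ψ α + ((2 * (N - 1) : ℤ) : ℝ) := by
    simp only [ψ, θ]
    rw [hper]
    push_cast
    field_simp
    ring
  rw [hψp, Int.floor_add_intCast, Int.ceil_add_intCast] at hcr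
  have hsum : ∑ x ∈ Γ, s x = (Γi.card : ℤ) - Γe.card := by
    rw [Finset.sum_union hdisj, Finset.sum_congr rfl (fun x hx => if_pos hx),
      Finset.sum_congr (s₁ := Γe) rfl
        (fun x hx => if_neg (fun h => Finset.disjoint_left.1 hdisj h hx))]
    simp; ring
  rw [hsum] at hcr
  linarith

end Poinc

/-- Poincaré's formula (Pugh's generalization of Poincaré–Hopf on
the disk): for a C¹ vector field `F` on the closed unit disk `D² ⊂ ℝ²` with no
zeros on the boundary circle, only nondegenerate interior zeros, and only
generic tangencies with the boundary (interior tangencies `Γi`, where the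
second derivative of the squared distance along the flow is negative, and
exterior tangencies `Γe`, where it is positive), the sum of the indices of the
zeros equals `1 + (i - e)/2`. -/
theorem stmt8 (F : EuclideanSpace ℝ (Fin 2) → EuclideanSpace ℝ (Fin 2))
    (hF : ContDiff ℝ 1 F)
    (hFb : ∀ x ∈ Metric.sphere (0 : EuclideanSpace ℝ (Fin 2)) 1, F x ≠ 0)
    (Z : Finset (EuclideanSpace ℝ (Fin 2)))
    (hZ : ∀ x, x ∈ Z ↔ (x ∈ Metric.closedBall (0 : EuclideanSpace ℝ (Fin 2)) 1 ∧ F x = 0))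
    (hnd : ∀ p ∈ Z, (fderiv ℝ F p).det ≠ 0)
    (Γi Γe : Finset (EuclideanSpace ℝ (Fin 2)))
    (hdisj : Disjoint Γi Γe)
    (hΓ : ∀ x, (x ∈ Γi ∨ x ∈ Γe) ↔
      (x ∈ Metric.sphere (0 : EuclideanSpace ℝ (Fin 2)) 1 ∧ ⟪F x, x⟫ = 0))
    (hint : ∀ x ∈ Γi, ⟪F x, F x⟫ + ⟪fderiv ℝ F x (F x), x⟫ < 0)
    (hext : ∀ x ∈ Γe, 0 < ⟪F x, F x⟫ + ⟪fderiv ℝ F x (F x), x⟫) :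
    ∑ p ∈ Z, Real.sign ((fderiv ℝ F p).det)
      = 1 + ((Γi.card : ℝ) - (Γe.card : ℝ)) / 2 := by
  classical
  let e : ℂ ≃ₗᵢ[ℝ] EuclideanSpace ℝ (Fin 2) := Complex.orthonormalBasisOneI.repr
  let E : ℂ ≃L[ℝ] EuclideanSpace ℝ (Fin 2) := e.toContinuousLinearEquiv
  let f : ℂ → ℂ := fun z => e.symm (F (e z))
  let f' : ℂ → ℂ →L[ℝ] ℂ := fun z =>
    (E.symm : EuclideanSpace ℝ (Fin 2) →L[ℝ] ℂ).comp ((fderiv ℝ F (e z)).comp (E : ℂ →L[ℝ] _))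
  have hFd : ∀ x, HasFDerivAt F (fderiv ℝ F x) x :=
    fun x => (hF.differentiable one_ne_zero x).hasFDerivAt
  have hf : Continuous f := e.symm.continuous.comp (hF.continuous.comp e.continuous)
  have hf' : ∀ z, HasFDerivAt f (f' z) z := fun z =>
    E.symm.hasFDerivAt.comp z ((hFd (e z)).comp z E.hasFDerivAt)
  have hdet : ∀ z, (f' z).det = (fderiv ℝ F (e z)).det := by
    intro z
    exact LinearMap.det_conj (fderiv ℝ F (e z)).toLinearMap e.symm.toLinearEquiv
  have hinn : ∀ (v : EuclideanSpace ℝ (Fin 2)) (z : ℂ), ⟪e.symm v, z⟫ = ⟪v, e z⟫ := by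
    intro v z
    rw [← e.inner_map_map, e.apply_symm_apply]
  have happ : ∀ z, f' z (f z) = e.symm (fderiv ℝ F (e z) (F (e z))) := by
    intro z
    have : e (f z) = F (e z) := e.apply_symm_apply _
    change e.symm (fderiv ℝ F (e z) (e (f z))) = _
    rw [this]
  have hff : ∀ z, ⟪f z, f z⟫ = ⟪F (e z), F (e z)⟫ := fun z => e.symm.inner_map_map _ _
  let im : Finset (EuclideanSpace ℝ (Fin 2)) → Finset ℂ := fun S => S.map e.symm.toEquiv.toEmbedding
  have him : ∀ S z, z ∈ im S ↔ e z ∈ S := by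
    intro S z
    simp only [im, Finset.mem_map_equiv]
    rfl
  have hsph : ∀ z, e z ∈ Metric.sphere (0 : EuclideanSpace ℝ (Fin 2)) 1 ↔ z ∈ Metric.sphere (0:ℂ) 1 := by
    intro z; simp
  have hbal : ∀ z, e z ∈ Metric.closedBall (0 : EuclideanSpace ℝ (Fin 2)) 1 ↔
      z ∈ Metric.closedBall (0:ℂ) 1 := by
    intro z; simp
  have hf0 : ∀ z, f z = 0 ↔ F (e z) = 0 := by
    intro z; simp [f]
  have key := Poinc.poincare_complex f hf f' hf'
    (fun z hz h => hFb (e z) ((hsph z).2 hz) ((hf0 z).1 h)) (im Z)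
    (fun z => by rw [him, hZ, hbal, hf0])
    (fun p hp => by rw [hdet]; exact hnd _ ((him _ _).1 hp))
    (im Γi) (im Γe) ((Finset.disjoint_map _).2 hdisj)
    (fun z => by rw [him, him, hΓ, hsph, ← hinn])
    (fun z hz => by
      rw [hff, happ, hinn]; exact hint _ ((him _ _).1 hz))
    (fun z hz => by
      rw [hff, happ, hinn]; exact hext _ ((him _ _).1 hz))
  have hs : ∑ p ∈ Z, Real.sign ((fderiv ℝ F p).det) =
      ((∑ p ∈ im Z, if 0 < (f' p).det then (1:ℤ) else -1 : ℤ) : ℝ) := by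
    simp only [im, Finset.sum_map]
    push_cast
    refine Finset.sum_congr rfl fun p hp => ?_
    have h1 : (f' (e.symm p)).det = (fderiv ℝ F p).det := by
      rw [hdet, e.apply_symm_apply]
    change _ = if 0 < (f' (e.symm p)).det then (1:ℝ) else -1
    rw [h1]
    rcases lt_or_gt_of_ne (hnd p hp) with h | h
    · rw [Real.sign_of_neg h, if_neg (not_lt.2 h.le)]
    · rw [Real.sign_of_pos h, if_pos h]
  rw [hs]
  simp only [im, Finset.card_map] at key ⊢
  have key' := congrArg (Int.cast : ℤ → ℝ) key
  push_cast at key' ⊢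
  linarith
end
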